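/- Fix a real number c. For r with 0 < r < √2, set b(r) := ⌈√5 / r⌉. Then for every ε > 0 there exists δ > 0 such that for all r ∈ (0, δ) and all integers n with n ≥ (2·log b(r) + c) · b(r)², the geometric graph with radius r on n independent uniformly distributed random points in the unit square [0,1]² is connected with probability at least exp(−e^{−c}) − ε. -/

import Mathlib

open MeasureTheory

/-- The closed unit square `[0,1]² ⊂ ℝ²` (with the Euclidean norm). -/
def unitSquare : Set (EuclideanSpace ℝ (Fin 2)) :=
  {p | ∀ i, p i ∈ Set.Icc (0 : ℝ) 1}

/-- The uniform probability measure on the unit square. -/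
noncomputable def unifSquare : Measure (EuclideanSpace ℝ (Fin 2)) :=
  volume.restrict unitSquare

/-- The geometric graph on the points `x 0, …, x (n-1)` with radius `r`: vertices `Fin n`,
with an edge between distinct `i` and `j` iff `‖x i − x j‖₂ ≤ r`. -/
def geomGraph {n : ℕ} (x : Fin n → EuclideanSpace ℝ (Fin 2)) (r : ℝ) : SimpleGraph (Fin n) :=
  SimpleGraph.fromRel fun i j => ‖x i - x j‖ ≤ r

/-!
Cut the unit cube of dimension `d` into `m = b ^ d` cells of side `1 / b`. Two points in the same
cell or in cells sharing a facet differ by at most `2 / b` in one coordinate and `1 / b` in the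
others, so their distance is at most `√(d + 3) / b ≤ r`; hence the graph is connected as soon as no
cell is empty. Filling the cells is the coupon collector problem with `m` boxes: for
`n = m log m + c m` balls the `k`-th inclusion–exclusion term `(m.choose k) (1 - k / m) ^ n` tends
to `exp (-c) ^ k / k!` and is dominated by a summable sequence, so the probability that no box stays
empty tends to `exp (-exp (-c))`. More balls only help.
-/

section Occupancy

open Filter Topology Finset

theorem card_surjective_eq_sum (ι α : Type*) [Fintype ι] [Fintype α] :
    (Nat.card {f : ι → α // Function.Surjective f} : ℤ) =
      ∑ k ∈ range (Fintype.card α + 1),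
        (-1) ^ k * (Fintype.card α).choose k * ((Fintype.card α : ℤ) - k) ^ Fintype.card ι := by
  classical
  let missing (a : α) : Finset (ι → α) := {f | ∀ i, f i ≠ a}
  have surjective_eq : univ.filter Function.Surjective = univ.inf fun a ↦ (missing a)ᶜ := by
    ext f
    simp [missing, mem_inf, Function.Surjective]
  have card_missing (t : Finset α) :
      #(t.inf missing) = (Fintype.card α - #t) ^ Fintype.card ι := by
    have : t.inf missing = Fintype.piFinset fun _ ↦ tᶜ := by
      ext f
      simp only [missing, mem_inf, mem_filter_univ, Fintype.mem_piFinset, mem_compl]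
      grind
    rw [this, Fintype.card_piFinset, prod_const, card_univ, card_compl]
  rw [Nat.card_eq_fintype_card, Fintype.card_subtype, surjective_eq,
    inclusion_exclusion_card_inf_compl]
  simp only [card_missing]
  rw [sum_powerset_apply_card
    fun k ↦ (-1 : ℤ) ^ k * ((Fintype.card α - k) ^ Fintype.card ι : ℕ), card_univ]
  refine sum_congr rfl fun k hk ↦ ?_
  rw [nsmul_eq_mul, Nat.cast_pow, Nat.cast_sub (mem_range_succ_iff.mp hk)]
  ring

/-- The probability that `n` balls, thrown independently and uniformly into the boxes `α`, leave no
box empty, as the proportion of surjections among all maps `Fin n → α`. -/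
noncomputable def occupancyProb (n : ℕ) (α : Type*) : ℝ :=
  Nat.card {f : Fin n → α // Function.Surjective f} / Nat.card α ^ n

theorem occupancyProb_congr (n : ℕ) {α β : Type*} (e : α ≃ β) :
    occupancyProb n α = occupancyProb n β := by
  have surjections_equiv : {f : Fin n → α // Function.Surjective f} ≃
      {f : Fin n → β // Function.Surjective f} :=
    (Equiv.piCongrRight fun _ ↦ e).subtypeEquiv fun f ↦ (e.comp_surjective f).symm
  rw [occupancyProb, occupancyProb, Nat.card_congr e, Nat.card_congr surjections_equiv]

theorem occupancyProb_eq_sum (n : ℕ) (α : Type*) [Fintype α] [Nonempty α] :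
    occupancyProb n α = ∑ k ∈ range (Fintype.card α + 1),
      (-1) ^ k * ((Fintype.card α).choose k * (1 - (k : ℝ) / Fintype.card α) ^ n) := by
  have card_surjective := congrArg (Int.cast : ℤ → ℝ) (card_surjective_eq_sum (Fin n) α)
  push_cast at card_surjective
  rw [occupancyProb, card_surjective, Nat.card_eq_fintype_card, Fintype.card_fin, sum_div]
  refine sum_congr rfl fun k _ ↦ ?_
  rw [one_sub_div (by simp), div_pow]
  ring

theorem occupancyProb_monotone (α : Type*) [Finite α] [Nonempty α] :
    Monotone (occupancyProb · α) := by
  intro n n' hn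
  obtain ⟨j, rfl⟩ := Nat.exists_eq_add_of_le hn
  let extend (p : {f : Fin n → α // Function.Surjective f} × (Fin j → α)) :
      {f : Fin (n + j) → α // Function.Surjective f} :=
    ⟨Fin.append p.1.1 p.2, fun a ↦ by
      obtain ⟨i, hi⟩ := p.1.2 a
      exact ⟨i.castAdd j, by rw [Fin.append_left, hi]⟩⟩
  have extend_injective : Function.Injective extend := fun p q hpq ↦ by
    have h : (p.1.1, p.2) = (q.1.1, q.2) :=
      (Fin.appendEquiv n j).injective (congrArg Subtype.val hpq)
    exact Prod.ext (Subtype.ext (congrArg Prod.fst h)) (Prod.mk.inj h).2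
  have card_le := Nat.card_le_card_of_injective extend extend_injective
  rw [Nat.card_prod, Nat.card_fun, Nat.card_fin] at card_le
  have hα : (0 : ℝ) < Nat.card α := mod_cast Nat.card_pos
  calc occupancyProb n α
      = Nat.card {f : Fin n → α // Function.Surjective f} * Nat.card α ^ j /
          Nat.card α ^ (n + j) := by
        rw [occupancyProb, pow_add, mul_div_mul_right _ _ (by positivity)]
    _ ≤ occupancyProb (n + j) α := by
        rw [occupancyProb]
        gcongr
        exact_mod_cast card_le

theorem pow_mul_one_sub_div_pow_le {m k : ℕ} (N : ℕ) (hm : 0 < m) (hk : k ≤ m) :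
    (m : ℝ) ^ k * (1 - k / m) ^ N ≤ Real.exp (Real.log m - N / m) ^ k := by
  have hm' : (0 : ℝ) < m := mod_cast hm
  calc (m : ℝ) ^ k * (1 - k / m) ^ N
      ≤ Real.exp (Real.log m) ^ k * Real.exp (-(k / m)) ^ N := by
        rw [Real.exp_log hm']
        gcongr
        · exact sub_nonneg.mpr (div_le_one_of_le₀ (mod_cast hk) hm'.le)
        · exact Real.one_sub_le_exp_neg _
    _ = Real.exp (Real.log m - N / m) ^ k := by
        simp only [← Real.exp_nat_mul, ← Real.exp_add]
        ring_nf

theorem le_pow_mul_one_sub_div_pow {m k : ℕ} (N : ℕ) (hk : k < m) :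
    Real.exp (Real.log m - N / (m - k)) ^ k ≤ (m : ℝ) ^ k * (1 - k / m) ^ N := by
  have hm : (0 : ℝ) < m := mod_cast hk.pos
  have hmk : (0 : ℝ) < m - k := sub_pos.mpr (mod_cast hk)
  have exp_le : Real.exp (-(k / (m - k))) ≤ 1 - k / m := by
    rw [Real.exp_neg, one_sub_div hm.ne', ← inv_div (m : ℝ) (m - k)]
    refine inv_anti₀ (div_pos hm hmk) ?_
    calc (m : ℝ) / (m - k) = k / (m - k) + 1 := by field_simp; ring
      _ ≤ _ := Real.add_one_le_exp _
  calc Real.exp (Real.log m - N / (m - k)) ^ k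
      = Real.exp (Real.log m) ^ k * Real.exp (-(k / (m - k))) ^ N := by
        simp only [← Real.exp_nat_mul, ← Real.exp_add]
        ring_nf
    _ ≤ (m : ℝ) ^ k * (1 - k / m) ^ N := by
        rw [Real.exp_log hm]
        gcongr

theorem choose_mul_one_sub_div_pow_nonneg (m k N : ℕ) :
    0 ≤ (m.choose k : ℝ) * (1 - k / m) ^ N := by
  rcases le_or_gt k m with hk | hk
  · have : (k : ℝ) / m ≤ 1 := div_le_one_of_le₀ (mod_cast hk) m.cast_nonneg
    have := sub_nonneg.mpr this
    positivity
  · simp [Nat.choose_eq_zero_of_lt hk]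

theorem choose_mul_one_sub_div_pow_le {m : ℕ} (k N : ℕ) (hm : 0 < m) :
    (m.choose k : ℝ) * (1 - k / m) ^ N ≤ Real.exp (Real.log m - N / m) ^ k / k.factorial := by
  rcases le_or_gt k m with hk | hk
  · have : 0 ≤ 1 - (k : ℝ) / m :=
      sub_nonneg.mpr (div_le_one_of_le₀ (mod_cast hk) m.cast_nonneg)
    calc (m.choose k : ℝ) * (1 - k / m) ^ N
        ≤ m ^ k / k.factorial * (1 - k / m) ^ N := by
          gcongr
          exact Nat.choose_le_pow_div k m
      _ = m ^ k * (1 - k / m) ^ N / k.factorial := by ring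
      _ ≤ _ := by
          gcongr
          exact pow_mul_one_sub_div_pow_le N hm hk
  · rw [Nat.choose_eq_zero_of_lt hk, Nat.cast_zero, zero_mul]
    positivity

section Critical

variable {N : ℕ → ℕ} {c : ℝ}

theorem tendsto_div_sub_sub_log (hN : Tendsto (fun m : ℕ ↦ N m / m - Real.log m) atTop (𝓝 c))
    (k : ℕ) : Tendsto (fun m : ℕ ↦ N m / ((m : ℝ) - k) - Real.log m) atTop (𝓝 c) := by
  have hlog : Tendsto (fun m : ℕ ↦ Real.log m / m) atTop (𝓝 0) :=
    Real.isLittleO_log_id_atTop.tendsto_div_nhds_zero.comp tendsto_natCast_atTop_atTop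
  have hinv : Tendsto (fun m : ℕ ↦ (m : ℝ)⁻¹) atTop (𝓝 0) := tendsto_inv_atTop_nhds_zero_nat
  have hratio : Tendsto (fun m : ℕ ↦ (m : ℝ) / (m - k)) atTop (𝓝 1) := by
    simpa [sub_eq_add_neg] using tendsto_natCast_div_add_atTop (-k : ℝ)
  have hlim := hN.add
    ((((hN.mul hinv).add hlog).mul hratio).const_mul (k : ℝ))
  simp only [mul_zero, add_zero, zero_mul] at hlim
  refine hlim.congr' ?_
  filter_upwards [eventually_gt_atTop k] with m hm
  have hm0 : (m : ℝ) ≠ 0 := mod_cast (Nat.zero_lt_of_lt hm).ne'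
  have hmk : (m : ℝ) - k ≠ 0 := sub_ne_zero.mpr (mod_cast hm.ne')
  field_simp
  ring

theorem tendsto_pow_mul_one_sub_div_pow
    (hN : Tendsto (fun m : ℕ ↦ N m / m - Real.log m) atTop (𝓝 c)) (k : ℕ) :
    Tendsto (fun m : ℕ ↦ (m : ℝ) ^ k * (1 - k / m) ^ N m) atTop (𝓝 (Real.exp (-c) ^ k)) := by
  have lower := ((tendsto_div_sub_sub_log hN k).neg.rexp).pow k
  have upper := hN.neg.rexp.pow k
  simp only [neg_sub] at lower upper
  refine tendsto_of_tendsto_of_tendsto_of_le_of_le' lower upper ?_ ?_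
  · filter_upwards [eventually_gt_atTop k] with m hm
    exact le_pow_mul_one_sub_div_pow _ hm
  · filter_upwards [eventually_gt_atTop k] with m hm
    exact pow_mul_one_sub_div_pow_le _ hm.pos hm.le

theorem tendsto_choose_mul_one_sub_div_pow
    (hN : Tendsto (fun m : ℕ ↦ N m / m - Real.log m) atTop (𝓝 c)) (k : ℕ) :
    Tendsto (fun m : ℕ ↦ (m.choose k : ℝ) * (1 - k / m) ^ N m) atTop
      (𝓝 (Real.exp (-c) ^ k / k.factorial)) := by
  refine (((isEquivalent_choose k).mul .refl).tendsto_nhds_iff).mpr ?_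
  refine ((tendsto_pow_mul_one_sub_div_pow hN k).div_const (k.factorial : ℝ)).congr fun m ↦ ?_
  simp only [Pi.mul_apply]
  ring

/-- The **Erdős–Rényi coupon collector theorem**. -/
theorem tendsto_occupancyProb
    (hN : Tendsto (fun m : ℕ ↦ N m / m - Real.log m) atTop (𝓝 c)) :
    Tendsto (fun m ↦ occupancyProb (N m) (Fin m)) atTop (𝓝 (Real.exp (-Real.exp (-c)))) := by
  -- `c - 1` leaves room for a bound that no longer depends on `m`.
  have dominated : ∀ᶠ m : ℕ in atTop, ∀ k : ℕ,
      ‖(-1) ^ k * ((m.choose k : ℝ) * (1 - k / m) ^ N m)‖ ≤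
        Real.exp (-(c - 1)) ^ k / k.factorial := by
    filter_upwards [hN.eventually_const_le (sub_one_lt c), eventually_gt_atTop 0] with m hc hm k
    rw [norm_mul, norm_pow, norm_neg, norm_one, one_pow, one_mul,
      Real.norm_of_nonneg (choose_mul_one_sub_div_pow_nonneg m k (N m))]
    refine (choose_mul_one_sub_div_pow_le k (N m) hm).trans ?_
    gcongr
    linarith
  have tendsto_tsum := tendsto_tsum_of_dominated_convergence
    (Real.summable_pow_div_factorial _)
    (fun k ↦ (tendsto_choose_mul_one_sub_div_pow hN k).const_mul ((-1) ^ k)) dominated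
  have tsum_eq_exp : ∑' k : ℕ, (-1) ^ k * (Real.exp (-c) ^ k / k.factorial) =
      Real.exp (-Real.exp (-c)) := by
    simp only [Real.exp_eq_exp_ℝ, NormedSpace.exp_eq_tsum_div (𝔸 := ℝ), ← mul_div_assoc, ← mul_pow,
      neg_one_mul]
  rw [tsum_eq_exp] at tendsto_tsum
  refine tendsto_tsum.congr' ?_
  filter_upwards [eventually_gt_atTop 0] with m hm
  have : Nonempty (Fin m) := ⟨⟨0, hm⟩⟩
  rw [occupancyProb_eq_sum, Fintype.card_fin]
  refine tsum_eq_sum fun k hk ↦ ?_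
  rw [Nat.choose_eq_zero_of_lt (by simpa using hk), Nat.cast_zero, zero_mul, mul_zero]

end Critical

theorem tendsto_natCeil_log_add_mul_div_sub_log (c : ℝ) :
    Tendsto (fun m : ℕ ↦ ⌈(Real.log m + c) * m⌉₊ / m - Real.log m) atTop (𝓝 c) := by
  have hlog : Tendsto (fun m : ℕ ↦ Real.log m) atTop atTop :=
    Real.tendsto_log_atTop.comp tendsto_natCast_atTop_atTop
  have upper : Tendsto (fun m : ℕ ↦ c + (m : ℝ)⁻¹) atTop (𝓝 c) := by
    simpa using tendsto_inv_atTop_nhds_zero_nat.const_add c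
  refine tendsto_of_tendsto_of_tendsto_of_le_of_le' tendsto_const_nhds upper ?_ ?_
  · filter_upwards [eventually_gt_atTop 0] with m hm
    rw [le_sub_iff_add_le', le_div_iff₀ (mod_cast hm)]
    exact Nat.le_ceil _
  · filter_upwards [eventually_gt_atTop 0, hlog.eventually_ge_atTop (-c)] with m hm hc
    have hm' : (0 : ℝ) < m := mod_cast hm
    rw [sub_le_iff_le_add', div_le_iff₀ hm']
    calc (⌈(Real.log m + c) * m⌉₊ : ℝ)
        ≤ (Real.log m + c) * m + 1 :=
          (Nat.ceil_lt_add_one (mul_nonneg (by linarith) hm'.le)).le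
      _ = (Real.log m + (c + (m : ℝ)⁻¹)) * m := by field_simp; ring

theorem eventually_forall_lt_occupancyProb (c : ℝ) {p : ℝ} (hp : p < Real.exp (-Real.exp (-c))) :
    ∀ᶠ m : ℕ in atTop, ∀ n : ℕ, (Real.log m + c) * m ≤ n → p < occupancyProb n (Fin m) := by
  have hlim := tendsto_occupancyProb (tendsto_natCeil_log_add_mul_div_sub_log c)
  filter_upwards [hlim.eventually_const_lt hp, eventually_gt_atTop 0] with m hp hm n hn
  have : Nonempty (Fin m) := ⟨⟨0, hm⟩⟩
  exact hp.trans_le (occupancyProb_monotone _ (Nat.ceil_le.mpr hn))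

end Occupancy

section Connectivity

open SimpleGraph

theorem hasse_preconnected_of_isDirectedOrder (α : Type*) [PartialOrder α] [LocallyFiniteOrder α]
    [IsDirectedOrder α] : (hasse α).Preconnected := by
  have reachable_of_le {a b : α} (hab : a ≤ b) : (hasse α).Reachable a b :=
    (reachable_iff_reflTransGen a b).mpr <|
      Relation.ReflTransGen.mono (fun _ _ ↦ Or.inl) _ _ (le_iff_reflTransGen_covBy.mp hab)
  intro a b
  obtain ⟨c, hac, hbc⟩ := exists_ge_ge a b
  exact (reachable_of_le hac).trans (reachable_of_le hbc).symm

theorem preconnected_of_surjective {V W : Type*} {G : SimpleGraph V} {H : SimpleGraph W}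
    (hH : H.Preconnected) {f : V → W} (hf : Function.Surjective f)
    (hG : ∀ i j, f i = f j ∨ H.Adj (f i) (f j) → G.Reachable i j) : G.Preconnected := by
  have reachable_of_walk {a b : W} (w : H.Walk a b) :
      ∀ i j, f i = a → f j = b → G.Reachable i j := by
    induction w with
    | nil => exact fun i j hi hj ↦ hG i j (.inl (hi.trans hj.symm))
    | @cons _ c _ hadj _ ih =>
      rintro i j rfl hj
      obtain ⟨k, rfl⟩ := hf c
      exact (hG i k (.inr hadj)).trans (ih k j rfl hj)
  intro i j
  obtain ⟨w⟩ := hH (f i) (f j)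
  exact reachable_of_walk w i j rfl rfl

/-- The geometric graph on a family of points of a metric space: two distinct indices are joined
when their points are at distance at most `r`. It extends `geomGraph` beyond the plane. -/
def geometricGraph {V X : Type*} [PseudoMetricSpace X] (x : V → X) (r : ℝ) : SimpleGraph V :=
  SimpleGraph.fromRel fun i j ↦ dist (x i) (x j) ≤ r

theorem geomGraph_eq_geometricGraph {n : ℕ} (x : Fin n → EuclideanSpace ℝ (Fin 2)) (r : ℝ) :
    geomGraph x r = geometricGraph x r := by
  simp only [geomGraph, geometricGraph, dist_eq_norm]

theorem geometricGraph_connected_of_surjective {V W X : Type*} [Nonempty W] [PseudoMetricSpace X]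
    {H : SimpleGraph W} (hH : H.Preconnected) {C : W → Set X} {r : ℝ}
    (hC : ∀ a b, a = b ∨ H.Adj a b → ∀ p ∈ C a, ∀ q ∈ C b, dist p q ≤ r)
    {x : V → X} {f : V → W} (hf : Function.Surjective f) (hx : ∀ i, x i ∈ C (f i)) :
    (geometricGraph x r).Connected := by
  have : Nonempty V := hf.nonempty
  refine ⟨preconnected_of_surjective hH hf fun i j hij ↦ ?_⟩
  by_cases hne : i = j
  · rw [hne]
  · exact Adj.reachable ⟨hne, .inl (hC _ _ hij _ (hx i) _ (hx j))⟩

end Connectivity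

section Grid

open SimpleGraph

variable {ι : Type*} {b : ℕ} {q q' : ι → Fin b} {p p' : EuclideanSpace ℝ ι}

/-- The cell with index `q` in the partition of `[0,1)^ι` into cubes of side `1 / b`. It is
half-open, so that distinct cells are disjoint. -/
def gridCell (b : ℕ) (q : ι → Fin b) : Set (EuclideanSpace ℝ ι) :=
  {p | ∀ i, p i ∈ Set.Ico ((q i : ℝ) / b) (((q i : ℝ) + 1) / b)}

theorem abs_sub_le_of_mem_gridCell (hp : p ∈ gridCell b q) (hp' : p' ∈ gridCell b q') (i : ι) :
    |p i - p' i| ≤ (|(q i : ℝ) - q' i| + 1) / b := by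
  obtain ⟨hp_ge, hp_lt⟩ := hp i
  obtain ⟨hp'_ge, hp'_lt⟩ := hp' i
  have hb : (0 : ℝ) < b := mod_cast (q i).pos
  rw [div_le_iff₀ hb] at hp_ge hp'_ge
  rw [lt_div_iff₀ hb] at hp_lt hp'_lt
  rw [le_div_iff₀ hb]
  calc |p i - p' i| * b = |p i * b - p' i * b| := by rw [← sub_mul, abs_mul, abs_of_pos hb]
    _ ≤ |(q i : ℝ) - q' i| + 1 := by
        rw [abs_le]
        constructor <;> linarith [le_abs_self ((q i : ℝ) - q' i), neg_abs_le ((q i : ℝ) - q' i)]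

theorem eq_of_mem_gridCell (hp : p ∈ gridCell b q) (hp' : p ∈ gridCell b q') : q = q' := by
  funext i
  have hb : (0 : ℝ) < b := mod_cast (q i).pos
  have index_lt {s t : ι → Fin b} (hs : p ∈ gridCell b s) (ht : p ∈ gridCell b t) :
      (s i : ℕ) < t i + 1 := by
    have := (hs i).1.trans_lt (ht i).2
    rw [div_lt_div_iff_of_pos_right hb] at this
    exact_mod_cast this
  have := index_lt hp hp'
  have := index_lt hp' hp
  omega

theorem pairwise_disjoint_gridCell (ι : Type*) (b : ℕ) :
    Pairwise (Function.onFun Disjoint (gridCell (ι := ι) b)) :=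
  fun _ _ hne ↦ Set.disjoint_left.mpr fun _ hp hp' ↦ hne (eq_of_mem_gridCell hp hp')

variable [Fintype ι]

theorem dist_le_of_mem_gridCell (hp : p ∈ gridCell b q) (hp' : p' ∈ gridCell b q') :
    dist p p' ≤ √(∑ i, (|(q i : ℝ) - q' i| + 1) ^ 2) / b := by
  calc dist p p' = √(∑ i, |p i - p' i| ^ 2) := EuclideanSpace.dist_eq p p'
    _ ≤ √(∑ i, ((|(q i : ℝ) - q' i| + 1) / b) ^ 2) := by
        gcongr with i
        exact abs_sub_le_of_mem_gridCell hp hp' i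
    _ = √(∑ i, (|(q i : ℝ) - q' i| + 1) ^ 2) / b := by
        simp only [div_pow]
        rw [← Finset.sum_div, Real.sqrt_div' _ (by positivity), Real.sqrt_sq b.cast_nonneg]

theorem sum_abs_sub_add_one_sq_of_covBy (h : q ⋖ q') :
    ∑ i, (|(q i : ℝ) - q' i| + 1) ^ 2 = (Fintype.card ι + 3 : ℝ) := by
  classical
  obtain ⟨i, hi, heq⟩ := Pi.covBy_iff.mp h
  rw [Fin.covBy_iff, Nat.covBy_iff_add_one_eq] at hi
  have term_eq (j : ι) : (|(q j : ℝ) - q' j| + 1) ^ 2 = 1 + if j = i then 3 else 0 := by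
    split_ifs with hj
    · rw [hj, ← hi]
      norm_num
    · rw [heq j hj]
      norm_num
  simp [term_eq, Finset.sum_add_distrib]

theorem sum_abs_sub_add_one_sq_le (h : q = q' ∨ (hasse (ι → Fin b)).Adj q q') :
    ∑ i, (|(q i : ℝ) - q' i| + 1) ^ 2 ≤ (Fintype.card ι + 3 : ℝ) := by
  rw [hasse_adj] at h
  rcases h with rfl | h | h
  · simp
  · exact (sum_abs_sub_add_one_sq_of_covBy h).le
  · simp_rw [abs_sub_comm (q _ : ℝ)]
    exact (sum_abs_sub_add_one_sq_of_covBy h).le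

theorem geometricGraph_connected_of_mem_gridCell [NeZero b] {r : ℝ}
    (hr : √(Fintype.card ι + 3) ≤ r * b) {V : Type*} {x : V → EuclideanSpace ℝ ι}
    {f : V → ι → Fin b} (hf : Function.Surjective f) (hx : ∀ v, x v ∈ gridCell b (f v)) :
    (geometricGraph x r).Connected := by
  classical
  refine geometricGraph_connected_of_surjective (hasse_preconnected_of_isDirectedOrder _)
    (fun q q' hqq' p hp p' hp' ↦ ?_) hf hx
  calc dist p p' ≤ √(∑ i, (|(q i : ℝ) - q' i| + 1) ^ 2) / b := dist_le_of_mem_gridCell hp hp'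
    _ ≤ √(Fintype.card ι + 3) / b := by
        gcongr
        exact sum_abs_sub_add_one_sq_le hqq'
    _ ≤ r := (div_le_iff₀ (mod_cast NeZero.pos b)).mpr hr

end Grid

section Measure

open Finset

/-- The closed unit cube `[0,1]^ι`, of which `unitSquare` is the planar case. -/
def unitCube (ι : Type*) : Set (EuclideanSpace ℝ ι) :=
  {p | ∀ i, p i ∈ Set.Icc (0 : ℝ) 1}

/-- The uniform probability measure on the unit cube, of which `unifSquare` is the planar case. -/
noncomputable def unifCube (ι : Type*) [Fintype ι] : Measure (EuclideanSpace ℝ ι) :=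
  volume.restrict (unitCube ι)

variable {ι : Type*} {b : ℕ}

theorem gridCell_subset_unitCube (q : ι → Fin b) : gridCell b q ⊆ unitCube ι := fun p hp i ↦
  ⟨(by positivity : (0 : ℝ) ≤ q i / b).trans (hp i).1,
    (hp i).2.le.trans (div_le_one_of_le₀ (mod_cast (q i).isLt) b.cast_nonneg)⟩

theorem gridCell_eq_preimage (q : ι → Fin b) :
    gridCell b q = WithLp.ofLp ⁻¹' Set.univ.pi fun i ↦
      Set.Ico ((q i : ℝ) / b) (((q i : ℝ) + 1) / b) := by
  ext p
  simp [gridCell]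

theorem measurableSet_gridCell [Countable ι] (q : ι → Fin b) : MeasurableSet (gridCell b q) := by
  rw [gridCell_eq_preimage]
  exact WithLp.measurable_ofLp _ _ (MeasurableSet.univ_pi fun _ ↦ measurableSet_Ico)

variable [Fintype ι]

instance : IsProbabilityMeasure (unifCube ι) := by
  have preimage_eq : unitCube ι = WithLp.ofLp ⁻¹' Set.univ.pi fun _ ↦ Set.Icc (0 : ℝ) 1 := by
    ext p
    simp [unitCube, -Set.pi_univ_Icc]
  have volume_eq : volume (unitCube ι) = 1 := by
    rw [preimage_eq, (PiLp.volume_preserving_ofLp ι).measure_preimage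
      (MeasurableSet.univ_pi fun _ ↦ measurableSet_Icc).nullMeasurableSet, volume_pi_pi]
    simp
  exact ⟨by rw [unifCube, Measure.restrict_apply_univ, volume_eq]⟩

theorem unifCube_real_gridCell (q : ι → Fin b) :
    (unifCube ι).real (gridCell b q) = ((b : ℝ) ^ Fintype.card ι)⁻¹ := by
  rw [unifCube, measureReal_def, Measure.restrict_eq_self _ (gridCell_subset_unitCube q),
    gridCell_eq_preimage, (PiLp.volume_preserving_ofLp ι).measure_preimage
      (MeasurableSet.univ_pi fun _ ↦ measurableSet_Ico).nullMeasurableSet,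
    Real.volume_pi_Ico_toReal fun i ↦ by gcongr; linarith]
  simp [← sub_div]

theorem occupancyProb_le_measureReal_pi {Ω α : Type*} [MeasurableSpace Ω] {μ : Measure Ω}
    [IsFiniteMeasure μ] [Finite α] {C : α → Set Ω} (hmeas : ∀ a, MeasurableSet (C a))
    (hdisj : Pairwise (Function.onFun Disjoint C)) (hμ : ∀ a, (Nat.card α : ℝ)⁻¹ ≤ μ.real (C a))
    (n : ℕ) :
    occupancyProb n α ≤ (Measure.pi fun _ : Fin n ↦ μ).real
      {x | ∃ f : Fin n → α, Function.Surjective f ∧ ∀ i, x i ∈ C (f i)} := by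
  classical
  have := Fintype.ofFinite α
  let box (f : {f : Fin n → α // Function.Surjective f}) : Set (Fin n → Ω) :=
    Set.univ.pi fun i ↦ C (f.1 i)
  have box_disjoint : Pairwise (Function.onFun Disjoint box) := fun f g hne ↦ by
    obtain ⟨i, hi⟩ := Function.ne_iff.mp (Subtype.coe_ne_coe.mpr hne)
    exact Set.disjoint_univ_pi.mpr ⟨i, hdisj hi⟩
  have box_measurable (f) : MeasurableSet (box f) := .univ_pi fun i ↦ hmeas _
  have le_measure_box (f) :
      ((Nat.card α : ℝ) ^ n)⁻¹ ≤ (Measure.pi fun _ : Fin n ↦ μ).real (box f) := by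
    calc ((Nat.card α : ℝ) ^ n)⁻¹ = ∏ _i : Fin n, (Nat.card α : ℝ)⁻¹ := by simp
      _ ≤ ∏ i, μ.real (C (f.1 i)) := by
          gcongr
          exact hμ _
      _ = _ := by simp [box, measureReal_def, Measure.pi_pi, ENNReal.toReal_prod]
  calc occupancyProb n α
      = ∑ _f : {f : Fin n → α // Function.Surjective f}, ((Nat.card α : ℝ) ^ n)⁻¹ := by
        simp [occupancyProb, div_eq_mul_inv]
    _ ≤ ∑ f, (Measure.pi fun _ : Fin n ↦ μ).real (box f) := by
        gcongr
        exact le_measure_box _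
    _ = (Measure.pi fun _ : Fin n ↦ μ).real (⋃ f, box f) :=
        (measureReal_iUnion_fintype box_disjoint box_measurable).symm
    _ ≤ (Measure.pi fun _ : Fin n ↦ μ).real
          {x | ∃ f : Fin n → α, Function.Surjective f ∧ ∀ i, x i ∈ C (f i)} :=
        measureReal_mono <| Set.iUnion_subset fun f x hx ↦
          ⟨f.1, f.2, fun i ↦ hx i (Set.mem_univ i)⟩

theorem occupancyProb_le_measureReal_connected [NeZero b] {r : ℝ}
    (hr : √(Fintype.card ι + 3) ≤ r * b) (n : ℕ) :
    occupancyProb n (ι → Fin b) ≤ (Measure.pi fun _ : Fin n ↦ unifCube ι).real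
      {x | (geometricGraph x r).Connected} := by
  have cell_measure (q : ι → Fin b) :
      (Nat.card (ι → Fin b) : ℝ)⁻¹ ≤ (unifCube ι).real (gridCell b q) := by
    simp [unifCube_real_gridCell, Nat.card_fun]
  refine (occupancyProb_le_measureReal_pi measurableSet_gridCell (pairwise_disjoint_gridCell ι b)
    cell_measure n).trans (measureReal_mono ?_)
  rintro x ⟨f, hf, hx⟩
  exact geometricGraph_connected_of_mem_gridCell hr hf hx

end Measure

section Threshold

open Filter Topology

theorem eventually_lt_measureReal_connected (ι : Type*) [Fintype ι] [Nonempty ι] (c : ℝ) {p : ℝ}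
    (hp : p < Real.exp (-Real.exp (-c))) :
    ∀ᶠ b : ℕ in atTop, ∀ n : ℕ, ∀ r : ℝ,
      (Fintype.card ι * Real.log b + c) * (b : ℝ) ^ Fintype.card ι ≤ n →
      √(Fintype.card ι + 3) ≤ r * b →
      p < (Measure.pi fun _ : Fin n ↦ unifCube ι).real {x | (geometricGraph x r).Connected} := by
  classical
  have cells_tendsto : Tendsto (fun b : ℕ ↦ b ^ Fintype.card ι) atTop atTop :=
    tendsto_pow_atTop Fintype.card_ne_zero
  filter_upwards [cells_tendsto.eventually (eventually_forall_lt_occupancyProb c hp),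
    eventually_gt_atTop 0] with b hocc hb n r hn hr
  have : NeZero b := ⟨hb.ne'⟩
  calc p < occupancyProb n (Fin (b ^ Fintype.card ι)) :=
        hocc n (by rw [Nat.cast_pow, Real.log_pow]; exact hn)
    _ = occupancyProb n (ι → Fin b) :=
        occupancyProb_congr n (Fintype.equivFinOfCardEq (by simp)).symm
    _ ≤ _ := occupancyProb_le_measureReal_connected hr n

theorem stmt_7_general (ι : Type*) [Fintype ι] [Nonempty ι] (c ε : ℝ) (hε : 0 < ε) :
    ∃ δ : ℝ, 0 < δ ∧ ∀ r : ℝ, 0 < r → r < δ → ∀ n : ℕ,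
      (Fintype.card ι * Real.log (⌈√(Fintype.card ι + 3) / r⌉₊ : ℝ) + c) *
        (⌈√(Fintype.card ι + 3) / r⌉₊ : ℝ) ^ Fintype.card ι ≤ n →
      Real.exp (-Real.exp (-c)) - ε ≤
        (Measure.pi fun _ : Fin n ↦ unifCube ι).real {x | (geometricGraph x r).Connected} := by
  have sqrt_pos : 0 < √((Fintype.card ι : ℝ) + 3) := by positivity
  have side_tendsto : Tendsto (fun r : ℝ ↦ ⌈√(Fintype.card ι + 3) / r⌉₊) (𝓝[>] 0) atTop :=
    tendsto_nat_ceil_atTop.comp (tendsto_inv_nhdsGT_zero.const_mul_atTop sqrt_pos)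
  obtain ⟨δ, hδ, hr⟩ := mem_nhdsGT_iff_exists_Ioo_subset.mp <|
    side_tendsto.eventually (eventually_lt_measureReal_connected ι c (sub_lt_self _ hε))
  exact ⟨δ, hδ, fun r hr0 hrδ n hn ↦
    (hr ⟨hr0, hrδ⟩ n r hn ((div_le_iff₀' hr0).mp (Nat.le_ceil _))).le⟩

end Threshold

/-- fix `c : ℝ` and set `b(r) = ⌈√5/r⌉`.  For every `ε > 0` there is `δ > 0`
such that for all `0 < r < δ` and all integers `n ≥ (2·log b(r) + c)·b(r)²`, the geometric
graph with radius `r` on `n` i.i.d. uniform points in the unit square is connected with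
probability at least `exp(−e^{−c}) − ε`. -/
theorem stmt_7 (c : ℝ) (ε : ℝ) (hε : 0 < ε) :
    ∃ δ : ℝ, 0 < δ ∧ ∀ r : ℝ, 0 < r → r < δ →
      ∀ n : ℕ,
        (2 * Real.log (⌈Real.sqrt 5 / r⌉₊ : ℝ) + c) * (⌈Real.sqrt 5 / r⌉₊ : ℝ) ^ 2 ≤ (n : ℝ) →
        Real.exp (-Real.exp (-c)) - ε ≤
          ((Measure.pi fun _ : Fin n => unifSquare)
            {x : Fin n → EuclideanSpace ℝ (Fin 2) | (geomGraph x r).Connected}).toReal := by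
  simp only [geomGraph_eq_geometricGraph]
  simpa [show (2 : ℝ) + 3 = 5 by norm_num] using! stmt_7_general (Fin 2) c ε hε
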